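/- Let B ⊂ ℝ⁴ be open and f = (f⁴,…,f⁷): B → ℝ⁴ smooth, with tangent vectors v_j(x) and real forms F₁(x) = Σ_{a=4}^{7}(∂f^a/∂x⁰)(x)·dy^a and F₂(x) = Σ_{i=1}^{3}Σ_{a=4}^{7}(∂f^a/∂x^i)(x)·dx^i∧dy^a as in the context. Then at every x ∈ B: (i) φ(v₁,v₂,v₃) = 1 − ½·*₇( φ ∧ F₂² ); and (ii) Σ_{k∈ℤ/3} φ(F₁♯, v_{k+1}, v_{k+2})·dx^k = −*₇( F₁ ∧ F₂ ∧ φ ), where k ranges over {1,2,3} with indices taken mod 3 in {1,2,3}. -/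

import Mathlib

open scoped BigOperators

noncomputable section

namespace FMpaper

variable {K : Type*} [NormedField K] [NormedAlgebra ℝ K]

/-- Coefficient model for the exterior algebra of `(ℝⁿ)*` with scalars in `K`:
a form is given by its coefficients on the basis `e^S`, `S ⊆ {0, …, n-1}` sorted. -/
abbrev Form (K : Type*) (n : ℕ) := Finset (Fin n) → K

variable {n : ℕ}

/-- Sign such that `e^s ∧ e^t = signMerge s t • e^(s ∪ t)` for disjoint sorted `s, t`. -/
def signMerge (s t : Finset (Fin n)) : K :=
  (-1 : K) ^ (((s ×ˢ t).filter (fun p => p.2 < p.1)).card)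

/-- Wedge product. -/
def wedge (α β : Form K n) : Form K n :=
  fun u => ∑ s ∈ u.powerset, signMerge s (u \ s) * α s * β (u \ s)

/-- Hodge star operator (for the standard inner product and orientation `e^{0⋯(n-1)}`). -/
def hstar (α : Form K n) : Form K n :=
  fun t => signMerge tᶜ t * α tᶜ

/-- Interior product with the basis vector `e_μ`. -/
def iprodB (μ : Fin n) (α : Form K n) : Form K n :=
  fun t => if μ ∈ t then 0
    else (-1 : K) ^ ((t.filter (fun j => j < μ)).card) * α (insert μ t)

/-- Interior product with the vector `v`. -/
def iprod (v : Fin n → K) (α : Form K n) : Form K n :=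
  fun t => ∑ μ, v μ * iprodB μ α t

/-- The basis covector `e^i` as a 1-form. -/
def e1 (i : Fin n) : Form K n := fun s => if s = {i} then 1 else 0

/-- The covector `v♭` dual to a vector `v`. -/
def flat (v : Fin n → K) : Form K n := ∑ i, v i • e1 i

/-- The vector `α♯` dual to a 1-form `α`. -/
def sharp1 (α : Form K n) : Fin n → K := fun i => α {i}

/-- The inner product of forms (extended `K`-bilinearly). -/
def inner' (α β : Form K n) : K := ∑ s, α s * β s

/-- The (Euclidean) norm of a form; for an `√-1 ℝ`-valued form `√-1 γ` this is `‖γ‖`. -/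
def fnorm (α : Form K n) : ℝ := Real.sqrt (∑ s, ‖α s‖ ^ 2)

/-- `α` is homogeneous of degree `k`. -/
def isGrade (k : ℕ) (α : Form K n) : Prop := ∀ s, s.card ≠ k → α s = 0

/-- Evaluation of a `k`-form on `k` vectors. -/
def evalForm {k : ℕ} (α : Form K n) (v : Fin k → (Fin n → K)) : K :=
  ∑ s : Finset (Fin n), α s *
    (if h : s.card = k then
      Matrix.det (Matrix.of fun i j => v i ((s.orderIsoOfFin h j : Fin n))) else 0)

/-- The matrix of the skew-symmetric endomorphism `γ♯` associated with a 2-form `γ`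
via `⟨γ♯ u, v⟩ = γ(u, v)`. -/
def mat2 (γ : Form K n) : Matrix (Fin n) (Fin n) K :=
  Matrix.of fun i j => if i < j then γ {i, j} else if j < i then - γ {i, j} else 0

/-- The standard `G₂` 3-form `φ = e^{123}+e^{145}+e^{167}+e^{246}−e^{257}−e^{347}−e^{356}`
on `ℝ⁷` (indices `1, …, 7` shifted to `0, …, 6`). -/
def phi7 : Form K 7 := fun s =>
  if s = ({0, 1, 2} : Finset (Fin 7)) then 1
  else if s = ({0, 3, 4} : Finset (Fin 7)) then 1
  else if s = ({0, 5, 6} : Finset (Fin 7)) then 1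
  else if s = ({1, 3, 5} : Finset (Fin 7)) then 1
  else if s = ({1, 4, 6} : Finset (Fin 7)) then -1
  else if s = ({2, 3, 6} : Finset (Fin 7)) then -1
  else if s = ({2, 4, 5} : Finset (Fin 7)) then -1
  else 0

/-- `*₇φ = e^{4567}+e^{2367}+e^{2345}+e^{1357}−e^{1346}−e^{1256}−e^{1247}` on `ℝ⁷`. -/
def psi7 : Form K 7 := fun s =>
  if s = ({3, 4, 5, 6} : Finset (Fin 7)) then 1
  else if s = ({1, 2, 5, 6} : Finset (Fin 7)) then 1
  else if s = ({1, 2, 3, 4} : Finset (Fin 7)) then 1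
  else if s = ({0, 2, 4, 6} : Finset (Fin 7)) then 1
  else if s = ({0, 2, 3, 5} : Finset (Fin 7)) then -1
  else if s = ({0, 1, 4, 5} : Finset (Fin 7)) then -1
  else if s = ({0, 1, 3, 6} : Finset (Fin 7)) then -1
  else 0

/-- The `G₂` 3-form `φ` on `V = span{e₁, …, e₇} ⊂ ℝ⁸`, regarded as a form on `ℝ⁸`
annihilated by `i(e₀)` (indices `1, …, 7` of `ℝ⁸`). -/
def phi8 : Form K 8 := fun s =>
  if s = ({1, 2, 3} : Finset (Fin 8)) then 1
  else if s = ({1, 4, 5} : Finset (Fin 8)) then 1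
  else if s = ({1, 6, 7} : Finset (Fin 8)) then 1
  else if s = ({2, 4, 6} : Finset (Fin 8)) then 1
  else if s = ({2, 5, 7} : Finset (Fin 8)) then -1
  else if s = ({3, 4, 7} : Finset (Fin 8)) then -1
  else if s = ({3, 5, 6} : Finset (Fin 8)) then -1
  else 0

/-- `*₇φ` on `V ⊂ ℝ⁸`, regarded as a 4-form on `ℝ⁸` annihilated by `i(e₀)`. -/
def psi8 : Form K 8 := fun s =>
  if s = ({4, 5, 6, 7} : Finset (Fin 8)) then 1
  else if s = ({2, 3, 6, 7} : Finset (Fin 8)) then 1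
  else if s = ({2, 3, 4, 5} : Finset (Fin 8)) then 1
  else if s = ({1, 3, 5, 7} : Finset (Fin 8)) then 1
  else if s = ({1, 3, 4, 6} : Finset (Fin 8)) then -1
  else if s = ({1, 2, 5, 6} : Finset (Fin 8)) then -1
  else if s = ({1, 2, 4, 7} : Finset (Fin 8)) then -1
  else 0

/-- The standard Cayley 4-form `Φ = e⁰ ∧ φ + *₇φ` on `ℝ⁸`. -/
def Phi8 : Form K 8 := wedge (e1 0) phi8 + psi8

/-- The index set of `V = span{e₁, …, e₇} ⊂ ℝ⁸`. -/
def Vset : Finset (Fin 8) := {1, 2, 3, 4, 5, 6, 7}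

/-- The Hodge star `*₇` of `V ⊂ ℝ⁸` (volume form `e^{1⋯7}`), acting on forms on `ℝ⁸`
annihilated by `i(e₀)`. -/
def star7 (α : Form K 8) : Form K 8 :=
  fun t => if (0 : Fin 8) ∈ t then 0 else signMerge (Vset \ t) t * α (Vset \ t)

/-- `α` is (the pullback of) a form on `V`, i.e. `i(e₀) α = 0`. -/
def onV (α : Form K 8) : Prop := ∀ s, (0 : Fin 8) ∈ s → α s = 0

/-- `λ²(α) = ½ (e⁰ ∧ α + i(α♯) φ)` for `α ∈ V*`. -/
def lambda2 (α : Form K 8) : Form K 8 :=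
  (2 : K)⁻¹ • (wedge (e1 0) α + iprod (sharp1 α) phi8)

/-- `λ⁴(α) = (1/√8) (e⁰ ∧ i(α♯) *₇φ − α ∧ φ)` for `α ∈ V*`. -/
def lambda4 (α : Form K 8) : Form K 8 :=
  (algebraMap ℝ K (Real.sqrt 8))⁻¹ • (wedge (e1 0) (iprod (sharp1 α) psi8) - wedge α phi8)

/-- `λ⁶(α) = *₈ λ²(α)` for `α ∈ V*`. -/
def lambda6 (α : Form K 8) : Form K 8 := hstar (lambda2 α)

/-- The projection `π²₇(α) = (α + *₈(Φ ∧ α))/4` onto `Λ²₇`. -/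
def pi27 (α : Form K 8) : Form K 8 := (4 : K)⁻¹ • (α + hstar (wedge Phi8 α))

/-- The projection `π⁴₇(β) = Σ_{μ=1}^{7} ⟨β, λ⁴(e^μ)⟩ λ⁴(e^μ)` onto `Λ⁴₇`. -/
def pi47 (β : Form K 8) : Form K 8 :=
  ∑ μ : Fin 7, inner' β (lambda4 (e1 μ.succ)) • lambda4 (e1 μ.succ)

/-- `τ(u₀,u₁,u₂,u₃) = Σ_{μ=1}^{7} λ⁴(e^μ)(u₀,u₁,u₂,u₃) ⬝ λ⁴(e^μ) = π⁴₇(u₀♭∧u₁♭∧u₂♭∧u₃♭)`. -/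
def tau4 (u : Fin 4 → (Fin 8 → K)) : Form K 8 :=
  ∑ μ : Fin 7, evalForm (lambda4 (e1 μ.succ)) u • lambda4 (e1 μ.succ)

/-- Partial derivative `∂f^a/∂x^j` at `x`. -/
def pd {m p : ℕ} (f : (Fin m → ℝ) → (Fin p → ℝ)) (x : Fin m → ℝ) (j : Fin m) (a : Fin p) : ℝ :=
  fderiv ℝ f x (Pi.single j 1) a


/-! Graph setting for Cayley `T⁴`-fibrations: `ℝ⁸ = ℝ⁴ × ℝ⁴` with coordinates
`(x⁰,…,x³,y⁴,…,y⁷)`. -/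

/-- The index of the coordinate `x^j` in `ℝ⁸`. -/
def xi (j : Fin 4) : Fin 8 := Fin.castAdd 4 j

/-- The index of the coordinate `y^a` (`a = 4,…,7` shifted to `0,…,3`) in `ℝ⁸`. -/
def yi (a : Fin 4) : Fin 8 := a.addNat 4

/-- The spanning tangent vectors `v_j = ∂_j + Σ_a (∂f^a/∂x^j) ∂_a` of the graph of `f`. -/
def vG (f : (Fin 4 → ℝ) → (Fin 4 → ℝ)) (x : Fin 4 → ℝ) (j : Fin 4) : Fin 8 → ℝ :=
  Pi.single (xi j) 1 + ∑ a : Fin 4, pd f x j a • (Pi.single (yi a) 1 : Fin 8 → ℝ)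

/-- The real 2-form `γ` with `F_∇^S = √-1 γ`, i.e. `γ = Σ_{j,a} (∂f^a/∂x^j) dx^j ∧ dy^a`. -/
def gammaS (f : (Fin 4 → ℝ) → (Fin 4 → ℝ)) (x : Fin 4 → ℝ) : Form ℝ 8 :=
  ∑ j : Fin 4, ∑ a : Fin 4, pd f x j a • wedge (e1 (xi j)) (e1 (yi a))

/-- The `√-1 ℝ`-valued curvature 2-form
`F_∇^S = √-1 Σ_{j,a} (∂f^a/∂x^j) dx^j ∧ dy^a` of the real Fourier–Mukai transform. -/
def FS8 (f : (Fin 4 → ℝ) → (Fin 4 → ℝ)) (x : Fin 4 → ℝ) : Form ℂ 8 :=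
  fun s => Complex.I * (gammaS f x s : ℂ)

/-- `F₁ = Σ_a (∂f^a/∂x⁰) dy^a`. -/
def F1g (f : (Fin 4 → ℝ) → (Fin 4 → ℝ)) (x : Fin 4 → ℝ) : Form ℝ 8 :=
  ∑ a : Fin 4, pd f x 0 a • e1 (yi a)

/-- `F₂ = Σ_{i=1}^{3} Σ_a (∂f^a/∂x^i) dx^i ∧ dy^a`. -/
def F2g (f : (Fin 4 → ℝ) → (Fin 4 → ℝ)) (x : Fin 4 → ℝ) : Form ℝ 8 :=
  ∑ i : Fin 3, ∑ a : Fin 4, pd f x i.succ a • wedge (e1 (xi i.succ)) (e1 (yi a))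

/-!
Write `φ = e^{123} + Σ_k e^k ∧ ω_k`, where `ω₁, ω₂, ω₃` is the hyperkähler triple on the fibre `ℝ⁴`.
Since `ω_k` is self-dual, `ω_k ∧ α ∧ β = ω_k(α♯, β♯) e^{4567}` for 1-forms `α`, `β` on the fibre.
With `F₂ = Σ_i dx^i ∧ A_i` this makes `φ ∧ F₂²` and `F₁ ∧ F₂ ∧ φ` linear combinations of
`e^{1⋯7}` and of the `dx^i ∧ dx^j ∧ e^{4567}`, whose coefficients are the numbers
`ω_k(A_i♯, A_j♯)` and `ω_k(F₁♯, A_i♯)`; the same numbers appear when `φ` is evaluated on the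
vectors `v_i = ∂_i + A_i♯` and `F₁♯`.
-/

section

variable {𝕜 : Type*} [NormedField 𝕜]

theorem signMerge_union_left {s t : Finset (Fin n)} (h : Disjoint s t) (w : Finset (Fin n)) :
    (signMerge (s ∪ t) w : 𝕜) = signMerge s w * signMerge t w := by
  rw [signMerge, signMerge, signMerge, ← pow_add, Finset.union_product, Finset.filter_union,
    Finset.card_union_of_disjoint
      (Finset.disjoint_filter_filter (Finset.disjoint_product.2 (.inl h)))]

theorem signMerge_union_right (s : Finset (Fin n)) {t w : Finset (Fin n)} (h : Disjoint t w) :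
    (signMerge s (t ∪ w) : 𝕜) = signMerge s t * signMerge s w := by
  rw [signMerge, signMerge, signMerge, ← pow_add, Finset.product_union, Finset.filter_union,
    Finset.card_union_of_disjoint
      (Finset.disjoint_filter_filter (Finset.disjoint_product.2 (.inr h)))]

theorem signMerge_mul_signMerge_swap {s t : Finset (Fin n)} (h : Disjoint s t) :
    (signMerge s t * signMerge t s : 𝕜) = (-1) ^ (s.card * t.card) := by
  have hswap : ((t ×ˢ s).filter fun p => p.2 < p.1).card
      = ((s ×ˢ t).filter fun p => ¬ p.2 < p.1).card := by
    refine Finset.card_nbij' Prod.swap Prod.swap ?_ ?_ (fun _ _ => rfl) (fun _ _ => rfl)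
    · rintro ⟨j, i⟩
      simp +contextual [le_of_lt]
    · rintro ⟨i, j⟩
      simp only [Finset.mem_coe, Finset.mem_filter, Finset.mem_product, Prod.swap]
      rintro ⟨⟨hi, hj⟩, hij⟩
      exact ⟨⟨hj, hi⟩, (not_lt.1 hij).lt_of_ne (Finset.disjoint_iff_ne.1 h i hi j hj)⟩
  rw [signMerge, signMerge, ← pow_add, hswap, Finset.card_filter_add_card_filter_not,
    Finset.card_product]

theorem signMerge_assoc {r s t : Finset (Fin n)} (hrs : Disjoint r s) (hst : Disjoint s t) :
    (signMerge (r ∪ s) t * signMerge r s : 𝕜) = signMerge r (s ∪ t) * signMerge s t := by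
  rw [signMerge_union_left hrs, signMerge_union_right r hst]
  ring

theorem signMerge_of_lt {s t : Finset (Fin n)} (h : ∀ i ∈ s, ∀ j ∈ t, i < j) :
    (signMerge s t : 𝕜) = 1 := by
  rw [signMerge, Finset.filter_false_of_mem, Finset.card_empty, pow_zero]
  rintro ⟨i, j⟩ hij
  exact (h i (Finset.mem_product.1 hij).1 j (Finset.mem_product.1 hij).2).not_gt

/-- The wedge product as a bilinear map, so that linearity lemmas for it come from `LinearMap`. -/
def wedgeBilin : Form 𝕜 n →ₗ[𝕜] Form 𝕜 n →ₗ[𝕜] Form 𝕜 n :=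
  LinearMap.mk₂ 𝕜 wedge
    (fun α α' β => by
      ext u
      simp only [wedge, Pi.add_apply, mul_add, add_mul, Finset.sum_add_distrib])
    (fun c α β => by
      ext u
      simp only [wedge, Pi.smul_apply, smul_eq_mul, Finset.mul_sum]
      exact Finset.sum_congr rfl fun _ _ => by ring)
    (fun α β β' => by
      ext u
      simp only [wedge, Pi.add_apply, mul_add, Finset.sum_add_distrib])
    (fun c α β => by
      ext u
      simp only [wedge, Pi.smul_apply, smul_eq_mul, Finset.mul_sum]
      exact Finset.sum_congr rfl fun _ _ => by ring)

theorem zero_wedge (β : Form 𝕜 n) : wedge 0 β = 0 := wedgeBilin.map_zero₂ β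

theorem wedge_add (α β γ : Form 𝕜 n) : wedge α (β + γ) = wedge α β + wedge α γ :=
  map_add (wedgeBilin α) β γ

theorem add_wedge (α β γ : Form 𝕜 n) : wedge (α + β) γ = wedge α γ + wedge β γ :=
  wedgeBilin.map_add₂ α β γ

theorem wedge_sub (α β γ : Form 𝕜 n) : wedge α (β - γ) = wedge α β - wedge α γ :=
  map_sub (wedgeBilin α) β γ

theorem neg_wedge (α β : Form 𝕜 n) : wedge (-α) β = -wedge α β := wedgeBilin.map_neg₂ α β

theorem wedge_neg (α β : Form 𝕜 n) : wedge α (-β) = -wedge α β := map_neg (wedgeBilin α) β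

theorem wedge_smul (c : 𝕜) (α β : Form 𝕜 n) : wedge α (c • β) = c • wedge α β :=
  map_smul (wedgeBilin α) c β

theorem smul_wedge (c : 𝕜) (α β : Form 𝕜 n) : wedge (c • α) β = c • wedge α β :=
  wedgeBilin.map_smul₂ c α β

theorem wedge_sum {ι : Type*} (α : Form 𝕜 n) (t : Finset ι) (β : ι → Form 𝕜 n) :
    wedge α (∑ i ∈ t, β i) = ∑ i ∈ t, wedge α (β i) :=
  map_sum (wedgeBilin α) β t

theorem sum_wedge {ι : Type*} (t : Finset ι) (α : ι → Form 𝕜 n) (β : Form 𝕜 n) :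
    wedge (∑ i ∈ t, α i) β = ∑ i ∈ t, wedge (α i) β :=
  wedgeBilin.map_sum₂ t α β

theorem wedge_assoc (α β γ : Form 𝕜 n) : wedge (wedge α β) γ = wedge α (wedge β γ) := by
  ext u
  simp only [wedge, Finset.mul_sum, Finset.sum_mul]
  rw [Finset.sum_sigma', Finset.sum_sigma']
  refine Finset.sum_bij' (fun p _ => ⟨p.2, p.1 \ p.2⟩) (fun p _ => ⟨p.1 ∪ p.2, p.1⟩)
    ?_ ?_ ?_ ?_ ?_ <;>
    simp only [Finset.mem_sigma, Finset.mem_powerset, Sigma.forall, and_imp]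
  · exact fun s r hs hr => ⟨hr.trans hs, Finset.sdiff_subset_sdiff hs subset_rfl⟩
  · exact fun r q hr hq =>
      ⟨Finset.union_subset hr (hq.trans Finset.sdiff_subset), Finset.subset_union_left⟩
  · intro s r _ hr
    rw [Finset.union_sdiff_of_subset hr]
  · intro r q _ hq
    rw [Finset.union_sdiff_cancel_left (Finset.disjoint_of_subset_right hq Finset.disjoint_sdiff)]
  · intro s r hs hr
    have hq : (u \ r) \ (s \ r) = u \ s := by
      rw [sdiff_sdiff_left, Finset.sup_eq_union, Finset.union_sdiff_of_subset hr]
    have hsplit : s \ r ∪ u \ s = u \ r := by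
      rw [Finset.union_comm, Finset.sdiff_union_sdiff_cancel hs hr]
    have hsign := signMerge_assoc (𝕜 := 𝕜) (r := r) (s := s \ r) (t := u \ s)
      Finset.disjoint_sdiff (Finset.disjoint_sdiff.mono_left Finset.sdiff_subset)
    rw [Finset.union_sdiff_of_subset hr, hsplit] at hsign
    rw [hq]
    linear_combination α r * β (s \ r) * γ (u \ s) * hsign

theorem wedge_comm_of_isGrade {k l : ℕ} {α β : Form 𝕜 n} (hα : isGrade k α) (hβ : isGrade l β) :
    wedge α β = (-1 : 𝕜) ^ (k * l) • wedge β α := by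
  ext u
  simp only [wedge, Pi.smul_apply, smul_eq_mul, Finset.mul_sum]
  refine Finset.sum_nbij' (u \ ·) (u \ ·) (fun s _ => by simp) (fun s _ => by simp)
    (fun s hs => by simpa using hs) (fun s hs => by simpa using hs) fun s hs => ?_
  rw [Finset.sdiff_sdiff_eq_self (Finset.mem_powerset.1 hs)]
  by_cases hk : s.card = k
  · by_cases hl : (u \ s).card = l
    · have hsign := signMerge_mul_signMerge_swap (𝕜 := 𝕜) (s := s) (t := u \ s)
        Finset.disjoint_sdiff
      have hsq : (signMerge (u \ s) s * signMerge (u \ s) s : 𝕜) = 1 := by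
        rw [signMerge, ← mul_pow]
        simp
      rw [hk, hl] at hsign
      rw [← hsign]
      linear_combination (- signMerge s (u \ s) * α s * β (u \ s)) * hsq
    · simp only [hβ _ hl, mul_zero, zero_mul]
  · simp only [hα _ hk, mul_zero, zero_mul]

theorem isGrade_wedge {k l : ℕ} {α β : Form 𝕜 n} (hα : isGrade k α) (hβ : isGrade l β) :
    isGrade (k + l) (wedge α β) := by
  intro u hu
  refine Finset.sum_eq_zero fun s hs => ?_
  have hcard := Finset.card_sdiff_add_card_eq_card (Finset.mem_powerset.1 hs)
  by_cases hk : s.card = k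
  · rw [hβ _ (by omega), mul_zero]
  · rw [hα _ hk, mul_zero, zero_mul]

theorem wedge_left_comm_of_isGrade {k l : ℕ} {α β : Form 𝕜 n} (hα : isGrade k α)
    (hβ : isGrade l β) (γ : Form 𝕜 n) :
    wedge α (wedge β γ) = (-1 : 𝕜) ^ (k * l) • wedge β (wedge α γ) := by
  rw [← wedge_assoc, wedge_comm_of_isGrade hα hβ, smul_wedge, wedge_assoc]

theorem wedge_wedge_wedge_comm_of_isGrade {k l : ℕ} (α : Form 𝕜 n) {β γ : Form 𝕜 n}
    (hβ : isGrade k β) (hγ : isGrade l γ) (δ : Form 𝕜 n) :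
    wedge (wedge α β) (wedge γ δ) = (-1 : 𝕜) ^ (k * l) • wedge (wedge α γ) (wedge β δ) := by
  rw [wedge_assoc, wedge_left_comm_of_isGrade hβ hγ, wedge_smul, wedge_assoc]

/-- The basis form `e^S` of the coefficient model. -/
def basisForm (s : Finset (Fin n)) : Form 𝕜 n := Pi.single s 1

theorem basisForm_apply (s t : Finset (Fin n)) :
    (basisForm s t : 𝕜) = if t = s then 1 else 0 :=
  Pi.single_apply s 1 t

theorem isGrade_basisForm {k : ℕ} {s : Finset (Fin n)} (hs : s.card = k) :
    isGrade k (basisForm s : Form 𝕜 n) := by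
  intro t ht
  rw [basisForm_apply, if_neg]
  rintro rfl
  exact ht hs

theorem wedge_basisForm_of_disjoint {s t : Finset (Fin n)} (h : Disjoint s t) :
    (wedge (basisForm s) (basisForm t) : Form 𝕜 n) = (signMerge s t : 𝕜) • basisForm (s ∪ t) := by
  ext u
  rw [wedge, Pi.smul_apply, smul_eq_mul, basisForm_apply (𝕜 := 𝕜) (s ∪ t)]
  split_ifs with hu
  · subst hu
    rw [Finset.sum_eq_single s]
    · rw [Finset.union_sdiff_cancel_left h, basisForm_apply, basisForm_apply, if_pos rfl,
        if_pos rfl, mul_one]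
    · intro r _ hr
      rw [basisForm_apply s, if_neg hr, mul_zero, zero_mul]
    · exact fun hs => absurd (Finset.mem_powerset.2 Finset.subset_union_left) hs
  · rw [mul_zero]
    refine Finset.sum_eq_zero fun r hr => ?_
    rw [mul_assoc, basisForm_apply, basisForm_apply, ite_zero_mul_ite_zero, if_neg, mul_zero]
    rintro ⟨rfl, rfl⟩
    exact hu (Finset.union_sdiff_of_subset (Finset.mem_powerset.1 hr)).symm

theorem wedge_basisForm_of_not_disjoint {s t : Finset (Fin n)} (h : ¬ Disjoint s t) :
    wedge (basisForm s) (basisForm t) = (0 : Form 𝕜 n) := by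
  ext u
  refine Finset.sum_eq_zero fun r _ => ?_
  rw [mul_assoc, basisForm_apply, basisForm_apply, ite_zero_mul_ite_zero, if_neg, mul_zero]
  rintro ⟨rfl, rfl⟩
  exact h Finset.disjoint_sdiff

theorem wedge_basisForm_of_lt {s t : Finset (Fin n)} (h : ∀ i ∈ s, ∀ j ∈ t, i < j) :
    wedge (basisForm s) (basisForm t) = (basisForm (s ∪ t) : Form 𝕜 n) := by
  have hdisj : Disjoint s t := Finset.disjoint_left.2 fun i hs ht => (h i hs i ht).false
  rw [wedge_basisForm_of_disjoint hdisj, signMerge_of_lt h, one_smul]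

theorem e1_eq_basisForm (i : Fin n) : (e1 i : Form 𝕜 n) = basisForm {i} := by
  ext s
  rw [e1, basisForm_apply]

theorem e1_wedge_basisForm {i : Fin n} {s : Finset (Fin n)} (h : ∀ j ∈ s, i < j) :
    wedge (e1 i) (basisForm s) = (basisForm (insert i s) : Form 𝕜 n) := by
  rw [e1_eq_basisForm, wedge_basisForm_of_lt (by simpa using h), Finset.insert_eq]

theorem isGrade_e1 (i : Fin n) : isGrade 1 (e1 i : Form 𝕜 n) := by
  rw [e1_eq_basisForm]
  exact isGrade_basisForm (Finset.card_singleton i)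

theorem e1_wedge_self (i : Fin n) : wedge (e1 i) (e1 i) = (0 : Form 𝕜 n) := by
  rw [e1_eq_basisForm, wedge_basisForm_of_not_disjoint (by simp)]

theorem e1_wedge_e1_comm (i j : Fin n) :
    wedge (e1 i) (e1 j) = -(wedge (e1 j) (e1 i) : Form 𝕜 n) := by
  rw [wedge_comm_of_isGrade (isGrade_e1 i) (isGrade_e1 j), mul_one, pow_one, neg_one_smul]

theorem e1_wedge_e1_of_lt {i j : Fin n} (h : i < j) :
    wedge (e1 i) (e1 j) = (basisForm {i, j} : Form 𝕜 n) := by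
  rw [e1_eq_basisForm j, e1_wedge_basisForm (by simpa using h)]

theorem sum_sum_e1_wedge_e1 (p : Fin 3 → Fin n) (C : Fin 3 → Fin 3 → Form 𝕜 n) :
    ∑ i, ∑ j, wedge (wedge (e1 (p i)) (e1 (p j))) (C i j)
      = ∑ k, wedge (wedge (e1 (p (k + 1))) (e1 (p (k + 2))))
          (C (k + 1) (k + 2) - C (k + 2) (k + 1)) := by
  have hcomm := fun i j => e1_wedge_e1_comm (𝕜 := 𝕜) (p i) (p j)
  simp only [Fin.sum_univ_three, Fin.isValue, Fin.reduceAdd, e1_wedge_self, zero_wedge, wedge_sub]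
  rw [hcomm 1 0, hcomm 2 1, hcomm 0 2]
  simp only [neg_wedge]
  abel

theorem evalForm_add {k : ℕ} (α β : Form 𝕜 n) (v : Fin k → Fin n → 𝕜) :
    evalForm (α + β) v = evalForm α v + evalForm β v := by
  simp only [evalForm, Pi.add_apply, add_mul, Finset.sum_add_distrib]

theorem evalForm_sub {k : ℕ} (α β : Form 𝕜 n) (v : Fin k → Fin n → 𝕜) :
    evalForm (α - β) v = evalForm α v - evalForm β v := by
  simp only [evalForm, Pi.sub_apply, sub_mul, Finset.sum_sub_distrib]

theorem evalForm_neg {k : ℕ} (α : Form 𝕜 n) (v : Fin k → Fin n → 𝕜) :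
    evalForm (-α) v = -evalForm α v := by
  simp only [evalForm, Pi.neg_apply, neg_mul, Finset.sum_neg_distrib]

theorem evalForm_basisForm {k : ℕ} {s : Finset (Fin n)} {g : Fin k → Fin n} (hg : StrictMono g)
    (hs : Finset.univ.image g = s) (v : Fin k → Fin n → 𝕜) :
    evalForm (basisForm s) v = Matrix.det (Matrix.of fun i j => v i (g j)) := by
  have hmem : ∀ i, g i ∈ s := fun i => hs ▸ Finset.mem_image_of_mem g (Finset.mem_univ i)
  have hcard : s.card = k := by
    rw [← hs, Finset.card_image_of_injective _ hg.injective, Finset.card_fin]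
  simp only [evalForm, basisForm_apply, ite_mul, one_mul, zero_mul, Finset.sum_ite_eq',
    Finset.mem_univ, if_true, dif_pos hcard, Finset.coe_orderIsoOfFin_apply,
    ← Finset.orderEmbOfFin_unique hcard hmem hg]

theorem evalForm_basisForm_pair {a b : Fin n} (hab : a < b) (v : Fin 2 → Fin n → 𝕜) :
    evalForm (basisForm {a, b}) v = v 0 a * v 1 b - v 0 b * v 1 a := by
  rw [evalForm_basisForm (g := ![a, b]) (by simpa using hab) (by simp [Fin.univ_succ]),
    Matrix.det_fin_two]
  rfl

theorem evalForm_basisForm_triple {a b c : Fin n} (hab : a < b) (hbc : b < c)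
    (v : Fin 3 → Fin n → 𝕜) :
    evalForm (basisForm {a, b, c}) v
      = v 0 a * v 1 b * v 2 c - v 0 a * v 1 c * v 2 b - v 0 b * v 1 a * v 2 c
        + v 0 b * v 1 c * v 2 a + v 0 c * v 1 a * v 2 b - v 0 c * v 1 b * v 2 a := by
  rw [evalForm_basisForm (g := ![a, b, c]) (by simpa using ⟨hab, hbc⟩) (by simp [Fin.univ_succ]),
    Matrix.det_fin_three]
  rfl

theorem isGrade_smul {k : ℕ} (c : 𝕜) {α : Form 𝕜 n} (hα : isGrade k α) : isGrade k (c • α) := by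
  intro s hs
  rw [Pi.smul_apply, hα s hs, smul_zero]

theorem isGrade_sum {ι : Type*} {k : ℕ} (t : Finset ι) {α : ι → Form 𝕜 n}
    (hα : ∀ i, isGrade k (α i)) : isGrade k (∑ i ∈ t, α i) := by
  intro s hs
  rw [Finset.sum_apply]
  exact Finset.sum_eq_zero fun i _ => hα i s hs

/-- The 1-form `Σ_a u^a dy^a`. -/
def fiberForm (u : Fin 4 → 𝕜) : Form 𝕜 8 := ∑ a, u a • e1 (yi a)

/-- The vector `Σ_a u^a ∂_a` tangent to the fibre `ℝ⁴` of `(x, y) ↦ x`. -/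
def fiberVector (u : Fin 4 → 𝕜) : Fin 8 → 𝕜 := ∑ a, u a • Pi.single (yi a) 1

/-- The vector `v_j = ∂_j + Σ_a A_j^a ∂_a`: for `A` the matrix of partial derivatives of `f`, the
`j`-th tangent vector of the graph of `f`. -/
def graphVector (A : Fin 4 → Fin 4 → 𝕜) (j : Fin 4) : Fin 8 → 𝕜 :=
  Pi.single (xi j) 1 + fiberVector (A j)

/-- The 2-form `Σ_{i=1}^{3} Σ_a A_i^a dx^i ∧ dy^a`, which is `F₂` when `A` is the matrix of
partial derivatives of `f`. -/
def graphTwoForm (A : Fin 4 → Fin 4 → 𝕜) : Form 𝕜 8 :=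
  ∑ i : Fin 3, ∑ a : Fin 4, A i.succ a • wedge (e1 (xi i.succ)) (e1 (yi a))

/-- The hyperkähler triple of 2-forms on the fibre `ℝ⁴`, normalised so that
`φ = e^{123} + Σ_k e^k ∧ ω_k`; the index `k : Fin 3` is shifted by one. -/
def omegaForm : Fin 3 → Form 𝕜 8 :=
  ![basisForm {4, 5} + basisForm {6, 7},
    basisForm {4, 6} - basisForm {5, 7},
    -basisForm {4, 7} - basisForm {5, 6}]

/-- The value `ω_k(u, w)` of the `k`-th form of the hyperkähler triple on two fibre vectors. -/
def omegaPairing (k : Fin 3) (u w : Fin 4 → 𝕜) : 𝕜 :=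
  evalForm (omegaForm k) ![fiberVector u, fiberVector w]

theorem fiberVector_xi (u : Fin 4 → 𝕜) (j : Fin 4) : fiberVector u (xi j) = 0 := by
  have hne : ∀ a, xi j ≠ yi a := by decide +revert
  simp [fiberVector, hne]

theorem fiberVector_yi (u : Fin 4 → 𝕜) (b : Fin 4) : fiberVector u (yi b) = u b := by
  have hinj : ∀ a, yi b = yi a ↔ b = a := by decide +revert
  simp [fiberVector, Pi.single_apply, hinj]

theorem graphVector_xi (A : Fin 4 → Fin 4 → 𝕜) (j i : Fin 4) :
    graphVector A j (xi i) = if i = j then 1 else 0 := by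
  have hinj : xi i = xi j ↔ i = j := by decide +revert
  simp [graphVector, fiberVector_xi, Pi.single_apply, hinj]

theorem graphVector_yi (A : Fin 4 → Fin 4 → 𝕜) (j a : Fin 4) :
    graphVector A j (yi a) = A j a := by
  have hne : yi a ≠ xi j := by decide +revert
  simp [graphVector, fiberVector_yi, hne]

theorem sharp1_fiberForm (u : Fin 4 → 𝕜) : sharp1 (fiberForm u) = fiberVector u := by
  ext i
  simp [sharp1, fiberForm, fiberVector, e1, Pi.single_apply]

theorem isGrade_fiberForm (u : Fin 4 → 𝕜) : isGrade 1 (fiberForm u) :=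
  isGrade_sum _ fun a => isGrade_smul (u a) (isGrade_e1 (yi a))

theorem isGrade_omegaForm (k : Fin 3) : isGrade 2 (omegaForm k : Form 𝕜 8) := by
  have hbasis : ∀ a b : Fin 8, a ≠ b → isGrade 2 (basisForm {a, b} : Form 𝕜 8) :=
    fun a b h => isGrade_basisForm (Finset.card_pair h)
  intro s hs
  fin_cases k <;> simp [omegaForm, hbasis _ _ _ s hs]

theorem graphTwoForm_eq (A : Fin 4 → Fin 4 → 𝕜) :
    graphTwoForm A = ∑ i : Fin 3, wedge (e1 (xi i.succ)) (fiberForm (A i.succ)) := by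
  simp only [graphTwoForm, fiberForm, wedge_sum, wedge_smul]

theorem phi8_eq_sum_basisForm : (phi8 : Form 𝕜 8) =
    basisForm {1, 2, 3} + basisForm {1, 4, 5} + basisForm {1, 6, 7} + basisForm {2, 4, 6}
      - basisForm {2, 5, 7} - basisForm {3, 4, 7} - basisForm {3, 5, 6} := by
  ext s
  simp only [phi8, Pi.add_apply, Pi.sub_apply, basisForm_apply]
  split_ifs <;> subst_vars <;> first | contradiction | simp

theorem phi8_eq_add_sum_wedge : (phi8 : Form 𝕜 8) =
    basisForm {1, 2, 3} + ∑ k : Fin 3, wedge (e1 (xi k.succ)) (omegaForm k) := by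
  simp +decide only [phi8_eq_sum_basisForm, Fin.sum_univ_three, xi, omegaForm, wedge_add, wedge_sub,
    wedge_neg, e1_wedge_basisForm, Finset.mem_insert, Finset.mem_singleton, forall_eq_or_imp,
    Matrix.cons_val_zero, Matrix.cons_val_one, Matrix.cons_val, Fin.isValue, Fin.reduceSucc,
    Fin.reduceCastAdd]
  abel

theorem omegaPairing_eq (k : Fin 3) (u w : Fin 4 → 𝕜) :
    omegaPairing k u w =
      ![u 0 * w 1 - u 1 * w 0 + (u 2 * w 3 - u 3 * w 2),
        u 0 * w 2 - u 2 * w 0 - (u 1 * w 3 - u 3 * w 1),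
        -(u 0 * w 3 - u 3 * w 0) - (u 1 * w 2 - u 2 * w 1)] k := by
  have h4 := fun u : Fin 4 → 𝕜 => fiberVector_yi u 0
  have h5 := fun u : Fin 4 → 𝕜 => fiberVector_yi u 1
  have h6 := fun u : Fin 4 → 𝕜 => fiberVector_yi u 2
  have h7 := fun u : Fin 4 → 𝕜 => fiberVector_yi u 3
  simp only [yi, Fin.reduceAddNat] at h4 h5 h6 h7
  fin_cases k <;>
    simp [omegaPairing, omegaForm, evalForm_add, evalForm_sub, evalForm_neg,
      evalForm_basisForm_pair, h4, h5, h6, h7]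

theorem evalForm_phi8 (v : Fin 3 → Fin 8 → 𝕜) :
    evalForm phi8 v = Matrix.det (Matrix.of fun i k : Fin 3 => v i (xi k.succ))
      + ∑ k : Fin 3, ∑ i : Fin 3,
          v i (xi k.succ) * omegaPairing k (v (i + 1) ∘ yi) (v (i + 2) ∘ yi) := by
  simp only [phi8_eq_sum_basisForm, evalForm_add, evalForm_sub, evalForm_basisForm_triple,
    omegaPairing_eq, Matrix.det_fin_three, Matrix.of_apply, Fin.sum_univ_three, Function.comp_apply,
    xi, yi, Matrix.cons_val_zero, Matrix.cons_val_one, Matrix.cons_val, Fin.isValue, Fin.reduceLT,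
    Fin.reduceAdd, Fin.reduceSucc, Fin.reduceCastAdd, Fin.reduceAddNat, zero_add]
  ring

theorem fiberForm_wedge_fiberForm (u w : Fin 4 → 𝕜) :
    wedge (fiberForm u) (fiberForm w) =
      (u 0 * w 1 - u 1 * w 0) • basisForm {yi 0, yi 1}
        + (u 0 * w 2 - u 2 * w 0) • basisForm {yi 0, yi 2}
        + (u 0 * w 3 - u 3 * w 0) • basisForm {yi 0, yi 3}
        + (u 1 * w 2 - u 2 * w 1) • basisForm {yi 1, yi 2}
        + (u 1 * w 3 - u 3 * w 1) • basisForm {yi 1, yi 3}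
        + (u 2 * w 3 - u 3 * w 2) • basisForm {yi 2, yi 3} := by
  have hcomm := fun i j => e1_wedge_e1_comm (𝕜 := 𝕜) (yi i) (yi j)
  have hlt : ∀ a b : Fin 4, a < b →
      (wedge (e1 (yi a)) (e1 (yi b)) : Form 𝕜 8) = basisForm {yi a, yi b} :=
    fun a b hab => e1_wedge_e1_of_lt ((Fin.addNat_lt_addNat_iff 4).2 hab)
  simp only [fiberForm, Fin.sum_univ_four, wedge_add, add_wedge, wedge_smul, smul_wedge,
    e1_wedge_self]
  rw [hcomm 1 0, hcomm 2 0, hcomm 2 1, hcomm 3 0, hcomm 3 1, hcomm 3 2, hlt 0 1 (by decide),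
    hlt 0 2 (by decide), hlt 0 3 (by decide), hlt 1 2 (by decide), hlt 1 3 (by decide),
    hlt 2 3 (by decide)]
  module

/-- Self-duality of `ω_k` on the fibre. -/
theorem omegaForm_wedge_basisForm_pair (k : Fin 3) {a b : Fin 4} (hab : a < b) :
    wedge (omegaForm k) (basisForm {yi a, yi b})
      = (omegaForm k {yi a, yi b} : 𝕜) • (basisForm {4, 5, 6, 7} : Form 𝕜 8) := by
  have hvol (s t : Finset (Fin 8)) (hst : Disjoint s t) (hunion : s ∪ t = {4, 5, 6, 7}) :
      (wedge (basisForm s) (basisForm t) : Form 𝕜 8) = signMerge s t • basisForm {4, 5, 6, 7} :=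
    hunion ▸ wedge_basisForm_of_disjoint hst
  fin_cases k <;> fin_cases a <;> fin_cases b <;> first
    | exact absurd hab (by decide)
    | simp +decide [omegaForm, yi, sub_eq_add_neg, add_wedge, neg_wedge,
        wedge_basisForm_of_not_disjoint, basisForm_apply, signMerge,
        hvol {4, 5} {6, 7} (by decide) (by decide), hvol {6, 7} {4, 5} (by decide) (by decide),
        hvol {4, 6} {5, 7} (by decide) (by decide), hvol {5, 7} {4, 6} (by decide) (by decide),
        hvol {4, 7} {5, 6} (by decide) (by decide), hvol {5, 6} {4, 7} (by decide) (by decide)]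

theorem omegaForm_wedge_fiberForm_wedge_fiberForm (k : Fin 3) (u w : Fin 4 → 𝕜) :
    wedge (omegaForm k) (wedge (fiberForm u) (fiberForm w))
      = omegaPairing k u w • basisForm {4, 5, 6, 7} := by
  simp +decide only [fiberForm_wedge_fiberForm, wedge_add, wedge_smul,
    omegaForm_wedge_basisForm_pair, smul_smul, ← add_smul]
  congr 1
  rw [omegaPairing_eq]
  fin_cases k <;> simp +decide [omegaForm, yi, basisForm_apply] <;> ring

theorem e1_xi_wedge_e1_xi (k : Fin 3) :
    (wedge (e1 (xi (k + 1).succ)) (e1 (xi (k + 2).succ)) : Form 𝕜 8)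
      = ![basisForm {2, 3}, -basisForm {1, 3}, basisForm {1, 2}] k := by
  fin_cases k
  · exact e1_wedge_e1_of_lt (i := 2) (j := 3) (by decide)
  · exact (e1_wedge_e1_comm 3 1).trans (congrArg Neg.neg (e1_wedge_e1_of_lt (by decide)))
  · exact e1_wedge_e1_of_lt (i := 1) (j := 2) (by decide)

theorem e1_xi_wedge_e1_xi_wedge_e1_xi (m k : Fin 3) :
    wedge (e1 (xi m.succ)) (wedge (e1 (xi (k + 1).succ)) (e1 (xi (k + 2).succ)))
      = if m = k then (basisForm {1, 2, 3} : Form 𝕜 8) else 0 := by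
  have h213 : ({2, 1, 3} : Finset (Fin 8)) = {1, 2, 3} := by decide
  have h132 : ({1, 3, 2} : Finset (Fin 8)) = {1, 2, 3} := by decide
  rw [e1_xi_wedge_e1_xi, e1_eq_basisForm]
  fin_cases m <;> fin_cases k <;>
    simp +decide [xi, wedge_neg, wedge_basisForm_of_disjoint,
      wedge_basisForm_of_not_disjoint, signMerge, h213, h132]

theorem basisForm_xi_wedge_e1_xi (i : Fin 3) :
    wedge (basisForm {1, 2, 3}) (e1 (xi i.succ)) = (0 : Form 𝕜 8) := by
  rw [e1_eq_basisForm]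
  exact wedge_basisForm_of_not_disjoint (by decide +revert)

theorem star7_basisForm {s : Finset (Fin 8)} (hs : s ⊆ Vset) :
    (star7 (basisForm s) : Form 𝕜 8) = (signMerge s (Vset \ s) : 𝕜) • basisForm (Vset \ s) := by
  have hV : ∀ t : Finset (Fin 8), 0 ∉ t ↔ t ⊆ Vset := by
    intro t
    rw [show Vset = ({0} : Finset (Fin 8))ᶜ by decide, Finset.subset_compl_singleton]
  ext t
  rw [star7, Pi.smul_apply, smul_eq_mul, basisForm_apply, basisForm_apply]
  by_cases ht : t = Vset \ s
  · subst ht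
    rw [if_neg ((hV _).2 Finset.sdiff_subset), Finset.sdiff_sdiff_eq_self hs, if_pos rfl,
      if_pos rfl]
  · rw [if_neg ht, mul_zero]
    split_ifs with h0 h
    · rfl
    · exact absurd (h ▸ (Finset.sdiff_sdiff_eq_self ((hV t).1 h0)).symm) ht
    · exact mul_zero _

theorem star7_smul (c : 𝕜) (α : Form 𝕜 8) : star7 (c • α) = c • star7 α := by
  ext t
  simp only [star7, Pi.smul_apply, smul_eq_mul, mul_ite, mul_zero, mul_left_comm]

theorem star7_neg (α : Form 𝕜 8) : star7 (-α) = -star7 α := by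
  rw [← neg_one_smul 𝕜 α, star7_smul, neg_one_smul]

theorem star7_sum {ι : Type*} (t : Finset ι) (α : ι → Form 𝕜 8) :
    star7 (∑ i ∈ t, α i) = ∑ i ∈ t, star7 (α i) := by
  ext s
  simp only [star7, Finset.sum_apply, Finset.mul_sum]
  split_ifs <;> simp

theorem star7_e1_wedge_e1_wedge_basisForm (k : Fin 3) :
    star7 (wedge (wedge (e1 (xi (k + 1).succ)) (e1 (xi (k + 2).succ))) (basisForm {4, 5, 6, 7}))
      = (e1 (xi k.succ) : Form 𝕜 8) := by
  have h23 : Vset \ ({2, 3} ∪ {4, 5, 6, 7}) = {1} := by decide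
  have h13 : Vset \ ({1, 3} ∪ {4, 5, 6, 7}) = {2} := by decide
  have h12 : Vset \ ({1, 2} ∪ {4, 5, 6, 7}) = {3} := by decide
  rw [e1_xi_wedge_e1_xi, e1_eq_basisForm]
  fin_cases k <;>
    simp +decide [xi, neg_wedge, wedge_basisForm_of_lt, star7_basisForm, star7_neg, h23, h13, h12,
      signMerge, -Finset.union_insert, -Finset.insert_union]

theorem graphTwoForm_wedge_self (A : Fin 4 → Fin 4 → 𝕜) :
    wedge (graphTwoForm A) (graphTwoForm A) = (-2 : 𝕜) • ∑ k : Fin 3,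
      wedge (wedge (e1 (xi (k + 1).succ)) (e1 (xi (k + 2).succ)))
        (wedge (fiberForm (A (k + 1).succ)) (fiberForm (A (k + 2).succ))) := by
  have hswap (i j : Fin 3) :
      wedge (wedge (e1 (xi i.succ)) (fiberForm (A i.succ)))
          (wedge (e1 (xi j.succ)) (fiberForm (A j.succ)))
        = wedge (wedge (e1 (xi i.succ)) (e1 (xi j.succ)))
            (-wedge (fiberForm (A i.succ)) (fiberForm (A j.succ))) := by
    rw [wedge_wedge_wedge_comm_of_isGrade _ (isGrade_fiberForm _) (isGrade_e1 _), mul_one, pow_one,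
      neg_one_smul, wedge_neg]
  rw [graphTwoForm_eq, sum_wedge]
  simp only [wedge_sum, hswap]
  rw [sum_sum_e1_wedge_e1 fun i => xi i.succ, Finset.smul_sum]
  refine Finset.sum_congr rfl fun k _ => ?_
  rw [wedge_comm_of_isGrade (isGrade_fiberForm (A (k + 2).succ))
    (isGrade_fiberForm (A (k + 1).succ)), ← wedge_smul (-2), mul_one, pow_one]
  congr 1
  module

theorem phi8_wedge_graphTwoForm_wedge_self (A : Fin 4 → Fin 4 → 𝕜) :
    wedge phi8 (wedge (graphTwoForm A) (graphTwoForm A)) =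
      (-2 * ∑ k : Fin 3, omegaPairing k (A (k + 1).succ) (A (k + 2).succ)) •
        (basisForm Vset : Form 𝕜 8) := by
  have hbase (k : Fin 3) (γ : Form 𝕜 8) :
      wedge (basisForm {1, 2, 3})
        (wedge (wedge (e1 (xi (k + 1).succ)) (e1 (xi (k + 2).succ))) γ) = 0 := by
    rw [wedge_assoc, ← wedge_assoc, basisForm_xi_wedge_e1_xi, zero_wedge]
  have hfiber (m k : Fin 3) :
      wedge (wedge (e1 (xi m.succ)) (omegaForm m))
        (wedge (wedge (e1 (xi (k + 1).succ)) (e1 (xi (k + 2).succ)))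
          (wedge (fiberForm (A (k + 1).succ)) (fiberForm (A (k + 2).succ))))
        = if m = k then omegaPairing k (A (k + 1).succ) (A (k + 2).succ) • basisForm Vset
          else 0 := by
    rw [wedge_wedge_wedge_comm_of_isGrade _ (isGrade_omegaForm m)
        (isGrade_wedge (isGrade_e1 _) (isGrade_e1 _)), omegaForm_wedge_fiberForm_wedge_fiberForm,
      e1_xi_wedge_e1_xi_wedge_e1_xi, wedge_smul]
    split_ifs with h
    · subst h
      rw [wedge_basisForm_of_lt (by decide),
        show ({1, 2, 3} ∪ {4, 5, 6, 7} : Finset (Fin 8)) = Vset by decide]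
      norm_num
    · rw [zero_wedge, smul_zero, smul_zero]
  rw [graphTwoForm_wedge_self, wedge_smul, wedge_sum, mul_smul, Finset.sum_smul]
  congr 1
  refine Finset.sum_congr rfl fun k _ => ?_
  rw [phi8_eq_add_sum_wedge, add_wedge, sum_wedge, hbase, zero_add]
  simp only [hfiber, Finset.sum_ite_eq', Finset.mem_univ, if_true]

theorem fiberForm_wedge_graphTwoForm_wedge_phi8 (A : Fin 4 → Fin 4 → 𝕜) (u : Fin 4 → 𝕜) :
    wedge (fiberForm u) (wedge (graphTwoForm A) phi8) = ∑ k : Fin 3,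
      (omegaPairing (k + 1) u (A (k + 2).succ) - omegaPairing (k + 2) u (A (k + 1).succ)) •
        wedge (wedge (e1 (xi (k + 1).succ)) (e1 (xi (k + 2).succ))) (basisForm {4, 5, 6, 7}) := by
  have hbase (i : Fin 3) :
      wedge (wedge (e1 (xi i.succ)) (fiberForm (A i.succ))) (basisForm {1, 2, 3}) = 0 := by
    rw [wedge_comm_of_isGrade (isGrade_wedge (isGrade_e1 _) (isGrade_fiberForm _))
      (isGrade_basisForm (k := 3) rfl), ← wedge_assoc, basisForm_xi_wedge_e1_xi, zero_wedge,
      smul_zero]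
  have hfiber (i m : Fin 3) :
      wedge (fiberForm u) (wedge (wedge (e1 (xi i.succ)) (fiberForm (A i.succ)))
          (wedge (e1 (xi m.succ)) (omegaForm m)))
        = wedge (wedge (e1 (xi i.succ)) (e1 (xi m.succ)))
            (-omegaPairing m u (A i.succ) • basisForm {4, 5, 6, 7}) := by
    rw [wedge_wedge_wedge_comm_of_isGrade _ (isGrade_fiberForm _) (isGrade_e1 _), wedge_smul,
      wedge_left_comm_of_isGrade (isGrade_fiberForm u)
        (isGrade_wedge (isGrade_e1 _) (isGrade_e1 _)), ← wedge_assoc (fiberForm u),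
      wedge_comm_of_isGrade (isGrade_wedge (isGrade_fiberForm u) (isGrade_fiberForm _))
        (isGrade_omegaForm m), omegaForm_wedge_fiberForm_wedge_fiberForm]
    simp only [← wedge_smul]
    norm_num
  rw [graphTwoForm_eq, phi8_eq_add_sum_wedge, wedge_add]
  simp only [sum_wedge, hbase, Finset.sum_const_zero, zero_add, wedge_sum, hfiber]
  rw [Finset.sum_comm, sum_sum_e1_wedge_e1 fun i => xi i.succ]
  simp only [← sub_smul, wedge_smul, neg_sub_neg]

theorem omegaPairing_swap (k : Fin 3) (u w : Fin 4 → 𝕜) :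
    omegaPairing k w u = -omegaPairing k u w := by
  simp only [omegaPairing_eq]
  fin_cases k <;>
    simp only [Fin.isValue, Fin.zero_eta, Fin.mk_one, Fin.reduceFinMk, Matrix.cons_val_zero,
      Matrix.cons_val_one, Matrix.cons_val] <;>
    ring

theorem evalForm_phi8_graphVector (A : Fin 4 → Fin 4 → 𝕜) :
    evalForm phi8 ![graphVector A 1, graphVector A 2, graphVector A 3]
      = 1 + ∑ k : Fin 3, omegaPairing k (A (k + 1).succ) (A (k + 2).succ) := by
  have hxi : Matrix.of (fun i k : Fin 3 => graphVector A i.succ (xi k.succ)) = 1 := by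
    ext i k
    simp [graphVector_xi, Matrix.one_apply, eq_comm]
  have hyi (j : Fin 4) : graphVector A j ∘ yi = A j := funext (graphVector_yi A j)
  have hv : ![graphVector A 1, graphVector A 2, graphVector A 3]
      = fun i => graphVector A i.succ := by
    ext i
    fin_cases i <;> rfl
  simp only [hv, evalForm_phi8, hyi, hxi, Matrix.det_one]
  simp only [graphVector_xi, ite_mul, one_mul, zero_mul, Fin.succ_inj, Finset.sum_ite_eq,
    Finset.mem_univ, if_true]

theorem evalForm_phi8_fiberVector_graphVector (A : Fin 4 → Fin 4 → 𝕜) (u : Fin 4 → 𝕜) (k : Fin 3) :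
    evalForm phi8 ![fiberVector u, graphVector A (k + 1).succ, graphVector A (k + 2).succ]
      = omegaPairing (k + 2) u (A (k + 1).succ) - omegaPairing (k + 1) u (A (k + 2).succ) := by
  have hyi (j : Fin 4) : graphVector A j ∘ yi = A j := funext (graphVector_yi A j)
  have hyu : fiberVector u ∘ yi = u := funext (fiberVector_yi u)
  have hdet : Matrix.det (Matrix.of fun i m : Fin 3 =>
      ![fiberVector u, graphVector A (k + 1).succ, graphVector A (k + 2).succ] i (xi m.succ)) = 0 :=
    Matrix.det_eq_zero_of_row_eq_zero 0 fun m => fiberVector_xi u m.succ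
  rw [evalForm_phi8, hdet, omegaPairing_swap (k + 1)]
  fin_cases k <;>
    simp [Fin.sum_univ_three, fiberVector_xi, graphVector_xi, hyi, hyu, sub_eq_add_neg, add_comm]

theorem statement9_general [NeZero (2 : 𝕜)] (A : Fin 4 → Fin 4 → 𝕜) :
    (evalForm phi8 ![graphVector A 1, graphVector A 2, graphVector A 3] =
        1 - (2 : 𝕜)⁻¹ * (star7 (wedge phi8 (wedge (graphTwoForm A) (graphTwoForm A)))) ∅) ∧
      ((∑ k : Fin 3,
          evalForm phi8
            ![sharp1 (fiberForm (A 0)), graphVector A (k + 1).succ, graphVector A (k + 2).succ] •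
            e1 (xi k.succ)) =
        - star7 (wedge (fiberForm (A 0)) (wedge (graphTwoForm A) phi8))) := by
  constructor
  · have hvol : (star7 (basisForm Vset) ∅ : 𝕜) = 1 := by
      simp +decide [star7_basisForm, signMerge, basisForm_apply]
    rw [evalForm_phi8_graphVector, phi8_wedge_graphTwoForm_wedge_self, star7_smul, Pi.smul_apply,
      hvol, smul_eq_mul, mul_one, neg_mul, mul_neg, sub_neg_eq_add,
      inv_mul_cancel_left₀ two_ne_zero]
  · rw [sharp1_fiberForm, fiberForm_wedge_graphTwoForm_wedge_phi8, star7_sum,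
      ← Finset.sum_neg_distrib]
    refine Finset.sum_congr rfl fun k _ => ?_
    rw [evalForm_phi8_fiberVector_graphVector, star7_smul, star7_e1_wedge_e1_wedge_basisForm,
      ← neg_smul, neg_sub]

end

/-- Lemma 5.3.  At every `x ∈ B`:
`φ(v₁,v₂,v₃) = 1 - ½ *₇(φ ∧ F₂²)` and
`Σ_{k ∈ ℤ/3} φ(F₁♯, v_{k+1}, v_{k+2}) dx^k = -*₇(F₁ ∧ F₂ ∧ φ)`. -/
theorem statement9 (B : Set (Fin 4 → ℝ)) (hB : IsOpen B)
    (f : (Fin 4 → ℝ) → (Fin 4 → ℝ)) (hf : ContDiffOn ℝ (⊤ : ℕ∞) f B) :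
    ∀ x ∈ B,
      (evalForm phi8 ![vG f x 1, vG f x 2, vG f x 3] =
        1 - (2 : ℝ)⁻¹ * (star7 (wedge phi8 (wedge (F2g f x) (F2g f x)))) ∅) ∧
      ((∑ k : Fin 3,
          evalForm phi8
            ![sharp1 (F1g f x), vG f x ((k + 1 : Fin 3)).succ, vG f x ((k + 2 : Fin 3)).succ] •
            e1 (xi k.succ)) =
        - star7 (wedge (F1g f x) (wedge (F2g f x) phi8))) := by
  intro x _
  exact statement9_general (pd f x)

end FMpaper
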